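/- Let H be a Hopf algebra over a field k and suppose r ∈ H satisfies the 1-dimensional partial comodule equations. Then S(r) also satisfies the 1-dimensional partial comodule equations. If moreover the antipode S is bijective, then S⁻¹(r) satisfies them as well. -/

import Mathlib

open TensorProduct

/-- The five 1-dimensional partial comodule equations for an element `r` of a Hopf
algebra `H`: `ε(r) = 1`; `r ⊗ r·S(r) = r₍₁₎ ⊗ r₍₂₎·S(r)`; `r·S(r₍₁₎) ⊗ r₍₂₎ = r·S(r) ⊗ r`;
`r ⊗ S(r)·r = r₍₁₎ ⊗ S(r₍₂₎)·r`; `S(r)·r ⊗ r = S(r)·r₍₁₎ ⊗ r₍₂₎`. -/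
def OneDimPCM (k : Type*) {H : Type*} [Field k] [Ring H] [HopfAlgebra k H] (r : H) : Prop :=
  Coalgebra.counit (R := k) r = 1
  ∧ r ⊗ₜ[k] (r * HopfAlgebra.antipode (R := k) r)
      = Coalgebra.comul (R := k) r * ((1 : H) ⊗ₜ[k] HopfAlgebra.antipode (R := k) r)
  ∧ (r ⊗ₜ[k] (1 : H)) *
        (LinearMap.rTensor H (HopfAlgebra.antipode (R := k)) (Coalgebra.comul (R := k) r))
      = (r * HopfAlgebra.antipode (R := k) r) ⊗ₜ[k] r
  ∧ r ⊗ₜ[k] (HopfAlgebra.antipode (R := k) r * r)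
      = (LinearMap.lTensor H (HopfAlgebra.antipode (R := k)) (Coalgebra.comul (R := k) r))
          * ((1 : H) ⊗ₜ[k] r)
  ∧ (HopfAlgebra.antipode (R := k) r * r) ⊗ₜ[k] r
      = ((HopfAlgebra.antipode (R := k) r) ⊗ₜ[k] (1 : H)) * Coalgebra.comul (R := k) r

section Helpers
open Coalgebra HopfAlgebra WithConv

variable {k H : Type*} [Field k] [Ring H] [HopfAlgebra k H]

/-- The flip composed with `S ⊗ S`. -/
noncomputable def flipS (k H : Type*) [Field k] [Ring H] [HopfAlgebra k H] :
    H ⊗[k] H →ₗ[k] H ⊗[k] H :=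
  (TensorProduct.comm k H H).toLinearMap ∘ₗ
    TensorProduct.map (antipode k (A := H)) (antipode k (A := H))

@[simp] lemma flipS_tmul (a b : H) :
    flipS k H (a ⊗ₜ b) = antipode k b ⊗ₜ[k] antipode k a := by
  simp [flipS]

lemma algHom_inv {A : Type*} [Ring A] [Algebra k A] (f : H →ₐ[k] A) :
    toConv (f.toLinearMap ∘ₗ antipode k (A := H)) * toConv f.toLinearMap = 1 := by
  have := LinearMap.algHom_comp_convMul_distrib (R := k) (C := H) f
    (toConv (antipode k (A := H))) (toConv LinearMap.id)
  rw [LinearMap.antipode_mul_id] at this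
  apply WithConv.ofConv_injective
  simp only [ofConv_toConv, LinearMap.comp_id] at this
  rw [← this]
  ext a
  simp [LinearMap.convOne_def]

lemma comul_antipode_flip (a : H) :
    comul (R := k) (antipode k a) = flipS k H (comul (R := k) a) := by
  let i₁ : H →ₐ[k] H ⊗[k] H := Algebra.TensorProduct.includeLeft
  let i₂ : H →ₐ[k] H ⊗[k] H := Algebra.TensorProduct.includeRight
  have hδ : toConv (comul (R := k) (A := H)) =
      toConv i₁.toLinearMap * toConv i₂.toLinearMap := by
    ext a
    rw [(ℛ k a).convMul_apply]
    simp [i₁, i₂, (ℛ k a).eq]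
  have hG : toConv (flipS k H ∘ₗ comul (R := k) (A := H)) =
      toConv (i₂.toLinearMap ∘ₗ antipode k (A := H)) *
        toConv (i₁.toLinearMap ∘ₗ antipode k (A := H)) := by
    ext a
    rw [(ℛ k a).convMul_apply]
    simp [i₁, i₂, ← (ℛ k a).eq]
  have hL : toConv (flipS k H ∘ₗ comul (R := k) (A := H)) *
      toConv (comul (R := k) (A := H)) = 1 := by
    rw [hδ, hG, mul_assoc, ← mul_assoc (toConv (i₁.toLinearMap ∘ₗ _)), algHom_inv, one_mul,
      algHom_inv]
  have := left_inv_eq_right_inv hL (LinearMap.comul_right_inv (R := k) (C := H))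
  exact (congr($(this).ofConv a)).symm

lemma flipS_mul (x y : H ⊗[k] H) : flipS k H (x * y) = flipS k H y * flipS k H x := by
  induction x with
  | zero => simp
  | add x x' h h' => simp [add_mul, mul_add, h, h']
  | tmul a b =>
    induction y with
    | zero => simp
    | add x x' h h' => simp [add_mul, mul_add, h, h']
    | tmul c d => simp [antipode_mul_antidistrib]

lemma flipS_rTensor (x : H ⊗[k] H) :
    flipS k H (LinearMap.rTensor H (antipode k) x)
      = LinearMap.lTensor H (antipode k) (flipS k H x) := by
  induction x with
  | zero => simp
  | add x x' h h' => simp [h, h']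
  | tmul a b => simp

lemma flipS_lTensor (x : H ⊗[k] H) :
    flipS k H (LinearMap.lTensor H (antipode k) x)
      = LinearMap.rTensor H (antipode k) (flipS k H x) := by
  induction x with
  | zero => simp
  | add x x' h h' => simp [h, h']
  | tmul a b => simp

lemma flipS_injective (hS : Function.Bijective (antipode k (A := H))) :
    Function.Injective (flipS k H) := by
  let e := LinearEquiv.ofBijective (antipode k (A := H)) hS
  have : flipS k H = ((TensorProduct.congr e e).trans (TensorProduct.comm k H H)).toLinearMap := by
    ext a b
    simp [e]
  rw [this]
  exact LinearEquiv.injective _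

lemma oneDim_antipode (r : H) : OneDimPCM k (antipode k r) ↔
    counit (R := k) r = 1
    ∧ flipS k H ((antipode k r * r) ⊗ₜ[k] r)
        = flipS k H ((antipode k r ⊗ₜ[k] (1 : H)) * comul (R := k) r)
    ∧ flipS k H (LinearMap.lTensor H (antipode k) (comul (R := k) r) * ((1 : H) ⊗ₜ[k] r))
        = flipS k H (r ⊗ₜ[k] (antipode k r * r))
    ∧ flipS k H ((r * antipode k r) ⊗ₜ[k] r)
        = flipS k H ((r ⊗ₜ[k] (1 : H)) * LinearMap.rTensor H (antipode k) (comul (R := k) r))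
    ∧ flipS k H (r ⊗ₜ[k] (r * antipode k r))
        = flipS k H (comul (R := k) r * ((1 : H) ⊗ₜ[k] antipode k r)) := by
  simp only [OneDimPCM, flipS_mul, flipS_rTensor, flipS_lTensor, flipS_tmul,
    comul_antipode_flip, counit_antipode, antipode_mul_antidistrib, antipode_one]

end Helpers

/-- if `r ∈ H` satisfies the 1-dimensional partial comodule equations, then so
does `S(r)`; and if the antipode is bijective, so does `S⁻¹(r)` (i.e. any preimage of `r`
under `S`). -/
theorem stmt8 (k H : Type*) [Field k] [Ring H] [HopfAlgebra k H]
    (r : H) (hr : OneDimPCM k r) :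
    OneDimPCM k (HopfAlgebra.antipode (R := k) r)
    ∧ (Function.Bijective (HopfAlgebra.antipode (R := k) (A := H)) →
        ∀ r' : H, HopfAlgebra.antipode (R := k) r' = r → OneDimPCM k r') := by
  have key : ∀ q : H, OneDimPCM k q → OneDimPCM k (HopfAlgebra.antipode (R := k) q) := by
    rintro q ⟨h1, h2, h3, h4, h5⟩
    exact (oneDim_antipode q).2 ⟨h1, by rw [h5], by rw [h4], by rw [h3], by rw [h2]⟩
  refine ⟨key r hr, ?_⟩
  rintro hS q rfl
  obtain ⟨h1, h5, h4, h3, h2⟩ := (oneDim_antipode q).1 hr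
  have hi := flipS_injective hS
  exact ⟨h1, hi h2, (hi h3).symm, (hi h4).symm, hi h5⟩
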